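/- Let β > 0 and x_w, x_l > 0 be real numbers with x_w > x_l. Let d_w be the derivative at x_w of F(x) = −log σ(β·log x − β·log x_l), and let d_l be the derivative at x_l of G(x) = −log σ(β·log x_w − β·log x). Then |d_w| < |d_l|; that is, once the policy assigns a larger probability ratio to the preferred response, the DPO loss applies a strictly larger gradient magnitude to the dispreferred ratio than to the preferred one. -/

import Mathlib

/-!
The scalar loss `t ↦ -log σ(t)` has derivative `-σ(-t)`. By the chain rule, with
`t = β log x_w - β log x_l`, the two derivatives are `-σ(-t) * (β / x_w)` and `σ(-t) * (β / x_l)`.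
They share the positive factor `σ(-t) * β`, so the magnitudes compare as `1 / x_w < 1 / x_l`.
-/

/-- The logistic sigmoid σ(t) = 1/(1 + exp(−t)). -/
noncomputable def sigmoid (t : ℝ) : ℝ := 1 / (1 + Real.exp (-t))

lemma sigmoid_pos (t : ℝ) : 0 < sigmoid t := by
  unfold sigmoid
  positivity

lemma hasDerivAt_neg_log_sigmoid (t : ℝ) :
    HasDerivAt (fun s : ℝ => -Real.log (sigmoid s)) (-sigmoid (-t)) t := by
  have hpos : 0 < 1 + Real.exp (-t) := by positivity
  have heq : (fun s : ℝ => -Real.log (sigmoid s)) = fun s => Real.log (1 + Real.exp (-s)) := by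
    funext s
    simp [sigmoid, Real.log_inv]
  rw [heq]
  convert (((hasDerivAt_neg t).exp).const_add 1).log hpos.ne' using 1
  rw [sigmoid, neg_neg, Real.exp_neg]
  have := Real.exp_pos t
  field_simp
  ring

/-- once `x_w > x_l`, the DPO loss in ratio space applies a strictly
larger gradient magnitude to the dispreferred ratio than to the preferred one. -/
theorem dpo_ratio_gradient_imbalance (β xw xl : ℝ) (hβ : 0 < β)
    (hxw : 0 < xw) (hxl : 0 < xl) (hlt : xl < xw) :
    |deriv (fun x : ℝ => -Real.log (sigmoid (β * Real.log x - β * Real.log xl))) xw| <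
    |deriv (fun x : ℝ => -Real.log (sigmoid (β * Real.log xw - β * Real.log x))) xl| := by
  set t := β * Real.log xw - β * Real.log xl with ht
  have hw : HasDerivAt (fun x : ℝ => -Real.log (sigmoid (β * Real.log x - β * Real.log xl)))
      (-sigmoid (-t) * (β * xw⁻¹)) xw :=
    HasDerivAt.comp (h₂ := fun s : ℝ => -Real.log (sigmoid s)) xw (hasDerivAt_neg_log_sigmoid t)
      (((Real.hasDerivAt_log hxw.ne').const_mul β).sub_const (β * Real.log xl))
  have hl : HasDerivAt (fun x : ℝ => -Real.log (sigmoid (β * Real.log xw - β * Real.log x)))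
      (-sigmoid (-t) * -(β * xl⁻¹)) xl :=
    HasDerivAt.comp (h₂ := fun s : ℝ => -Real.log (sigmoid s)) xl (hasDerivAt_neg_log_sigmoid t)
      (((Real.hasDerivAt_log hxl.ne').const_mul β).const_sub (β * Real.log xw))
  rw [hw.deriv, hl.deriv, neg_mul_neg, neg_mul, abs_neg]
  have hs := sigmoid_pos (-t)
  rw [abs_of_pos (by positivity), abs_of_pos (by positivity)]
  gcongr
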